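/- arXiv:1909.02922 — 2 statements merged into one kernel-verified Lean document; each statement's English description precedes it below -/
import Mathlib

section
/- Let Γ be a discrete subgroup of G = PSL(2,ℂ). Let X ⊆ Γ\G be a closed H-invariant subset containing no periodic U-orbit (i.e. there is no x ∈ X and t ≠ 0 with x·u_t = x), and let W ⊆ Γ\G be a compact subset with X ∩ W ≠ ∅ such that for every y ∈ X ∩ W the return-time set T(y) := {t ∈ ℝ : y·u_t ∈ W} has accumulating renormalizations. Let Y ⊆ X be U-minimal with respect to W and suppose that X ∖ y₀H is not closed for some y₀ ∈ Y ∩ W. Then Y·v ⊆ X for some v ∈ V with v ≠ e. -/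
open scoped MatrixGroups
open Matrix Filter

noncomputable section

/-- `SL(2,ℂ)`. -/
abbrev SL2C := Matrix.SpecialLinearGroup (Fin 2) ℂ

instance : TopologicalSpace SL2C := instTopologicalSpaceSubtype

/-- `G = PSL(2,ℂ) = SL(2,ℂ)/{±I}`, with the quotient topology. -/
abbrev PSL2C := Matrix.ProjectiveSpecialLinearGroup (Fin 2) ℂ

/-- The projection `π : SL(2,ℂ) → PSL(2,ℂ)`. -/
def pr : SL2C →* PSL2C := QuotientGroup.mk' _

/-- The upper triangular unipotent matrix `[[1, t],[0, 1]]` as an element of `SL(2,ℂ)`. -/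
def uMat (t : ℂ) : SL2C := ⟨!![1, t; 0, 1], by simp [Matrix.det_fin_two_of]⟩

/-- `u_t = π [[1, t],[0, 1]]` for `t ∈ ℝ`. -/
def uu (t : ℝ) : PSL2C := pr (uMat t)

/-- `v_s = π [[1, is],[0, 1]]` for `s ∈ ℝ`. -/
def vv (s : ℝ) : PSL2C := pr (uMat (s * Complex.I))

/-- The subgroup `U = {u_t : t ∈ ℝ}` as a subset of `PSL(2,ℂ)`. -/
def Uset : Set PSL2C := Set.range uu

/-- The subgroup `V = {v_s : s ∈ ℝ}` as a subset of `PSL(2,ℂ)`. -/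
def Vset : Set PSL2C := Set.range vv

/-- The subgroup `N = {π [[1, z],[0,1]] : z ∈ ℂ}` as a subset of `PSL(2,ℂ)`. -/
def Nset : Set PSL2C := {x | ∃ z : ℂ, x = pr (uMat z)}

/-- `H = π (SL(2,ℝ))`, the image in `PSL(2,ℂ)` of the real matrices. -/
def Hset : Set PSL2C :=
  {x | ∃ g : Matrix.SpecialLinearGroup (Fin 2) ℝ,
    x = pr (Matrix.SpecialLinearGroup.map (algebraMap ℝ ℂ) g)}

/-- The upper triangular matrix `[[a, z],[0, a⁻¹]]` as an element of `SL(2,ℂ)`,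
for a nonzero real `a`. -/
def tri (a : ℝ) (ha : a ≠ 0) (z : ℂ) : SL2C :=
  ⟨!![(a : ℂ), z; 0, (a : ℂ)⁻¹], by
    have h : (a : ℂ) ≠ 0 := by exact_mod_cast ha
    simp [Matrix.det_fin_two_of, mul_inv_cancel₀ h]⟩

/-- `AN = {π [[a, z],[0, a⁻¹]] : a > 0 real, z ∈ ℂ}`. -/
def ANset : Set PSL2C := {x | ∃ (a : ℝ) (ha : 0 < a) (z : ℂ), x = pr (tri a ha.ne' z)}

/-- `AV = {π [[a, ib],[0, a⁻¹]] : a > 0 real, b ∈ ℝ}`. -/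
def AVset : Set PSL2C :=
  {x | ∃ (a : ℝ) (ha : 0 < a) (b : ℝ), x = pr (tri a ha.ne' (b * Complex.I))}

/-- `A = {π diag(a, a⁻¹) : a > 0 real}`. -/
def Aset : Set PSL2C := {x | ∃ (a : ℝ) (ha : 0 < a), x = pr (tri a ha.ne' 0)}

variable (Γ : Subgroup PSL2C)

/-- The space `Γ\\G` of right cosets `Γg`, with the quotient topology. -/
abbrev XΓ := Quotient (QuotientGroup.rightRel Γ)

/-- The natural projection `G → Γ\\G`. -/
def mkX (g : PSL2C) : XΓ Γ := Quotient.mk'' g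

/-- The right translation action of `G` on `Γ\\G`: `(Γg₀)·g = Γ(g₀g)`. -/
def act (x : XΓ Γ) (g : PSL2C) : XΓ Γ :=
  Quotient.map' (fun h => h * g)
    (fun a b hab => by
      rw [QuotientGroup.rightRel_apply] at hab ⊢
      simpa [_root_.mul_inv_rev, mul_assoc] using hab) x

/-- The orbit `xS = {x·s : s ∈ S}` of a point `x ∈ Γ\\G` under a subset `S ⊆ G`. -/
def orb (x : XΓ Γ) (S : Set PSL2C) : Set (XΓ Γ) := (fun s => act Γ x s) '' S

/-- `Γ` is a lattice in `G`: there is a nonzero finite Borel measure on `Γ\\G`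
invariant under the right translation action of `G`. -/
def IsLattice : Prop :=
  letI : MeasurableSpace (XΓ Γ) := borel _
  ∃ μ : MeasureTheory.Measure (XΓ Γ), μ ≠ 0 ∧ MeasureTheory.IsFiniteMeasure μ ∧
    ∀ g : PSL2C, MeasureTheory.Measure.map (fun x => act Γ x g) μ = μ


/-- The topological `limsup` of a sequence of subsets of a topological space:
the set of points `x` such that every neighborhood of `x` meets `Q n` for
infinitely many `n`. -/
def seqLimsup {α : Type*} [TopologicalSpace α] (Q : ℕ → Set α) : Set α :=
  {x | ∀ O ∈ nhds x, {n | (O ∩ Q n).Nonempty}.Infinite}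


/-- A sequence `T : ℕ → Set ℝ` has accumulating renormalizations if for every
sequence `λ_n → +∞` of positive reals, the set `T_∞ = limsup_n λ_n⁻¹ T_n`
contains a sequence of nonzero elements tending to `0`, as well as a sequence
whose absolute values tend to `+∞`. -/
def HasAccumulatingRenormalizations (T : ℕ → Set ℝ) : Prop :=
  ∀ lam : ℕ → ℝ, (∀ n, 0 < lam n) → Tendsto lam atTop atTop →
    (∃ s : ℕ → ℝ,
      (∀ k, s k ∈ seqLimsup (fun n => (fun t => (lam n)⁻¹ * t) '' T n) ∧ s k ≠ 0) ∧
      Tendsto s atTop (nhds 0)) ∧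
    (∃ s : ℕ → ℝ,
      (∀ k, s k ∈ seqLimsup (fun n => (fun t => (lam n)⁻¹ * t) '' T n)) ∧
      Tendsto (fun k => |s k|) atTop atTop)

/-- A single subset `T ⊆ ℝ` has accumulating renormalizations if the constant
sequence `T_n = T` does. -/
def HasAccumulatingRenormalizationsSet (T : Set ℝ) : Prop :=
  HasAccumulatingRenormalizations (fun _ => T)


/-- `Y` is `U`-minimal with respect to the compact set `W`: `Y` is closed,
`U`-invariant, meets `W`, and for every `y ∈ Y ∩ W` the orbit `yU` is dense
in `Y`. -/
def UMinimalWrt (Y W : Set (XΓ Γ)) : Prop :=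
  IsClosed Y ∧ {y | ∃ x ∈ Y, ∃ t : ℝ, y = act Γ x (uu t)} = Y ∧ (Y ∩ W).Nonempty ∧
    ∀ y ∈ Y ∩ W, Y ⊆ closure {z | ∃ t : ℝ, z = act Γ y (uu t)}

/-!
Points of `X` outside `y₀H` accumulate at `y₀`, so `y₀ gₙ ∈ X` for some `gₙ → e` with
`y₀ gₙ ∉ y₀H`. The map `g ↦ g * ḡ⁻¹` turns the coset `gₙH` into a matrix `Mₙ → I`, and replacing
`gₙ` by `u_{-t} gₙ` conjugates `Mₙ` by `u_{-t}`. The entry growing fastest under this conjugation is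
a quadratic polynomial in `t` with constant term tending to `0`. Either its two other coefficients
vanish for some `n`, and then `gₙ ∈ VH` with nontrivial `V`-part, or they can be rescaled to a
nonzero limit. In the second case two nonzero points in the limit set of the rescaled return times
of `y₀` suffice to find return times `tₙ` along which the polynomial converges to a nonzero number,
i.e. `u_{-tₙ} gₙ hₙ → v ≠ e` for suitable `hₙ ∈ H`. As `y₀ u_{tₙ}` stays in the compact set `Y ∩ W`,
it accumulates at some `y ∈ Y ∩ W` with `y v ∈ X`; density of `yU` in `Y` and commutativity of `U`
and `V` extend this to all of `Y`.
-/

section Renormalization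

open scoped Topology

/-- The set `T_∞ = limsup_n λ_n⁻¹ T` of limit points of the rescaled copies of `T`. -/
def renormalizedLimsup (T : Set ℝ) (lam : ℕ → ℝ) : Set ℝ :=
  seqLimsup fun n => (fun t => (lam n)⁻¹ * t) '' T

/-- Every set `T_∞` obtained from `T` with scales `λ_n → +∞` has at least two nonzero points. This
is the part of accumulating renormalizations that excludes a polynomial of degree at most two
without constant term from vanishing on `T_∞`. -/
def HasNontrivialRenormalizations (T : Set ℝ) : Prop :=
  ∀ lam : ℕ → ℝ, (∀ n, 0 < lam n) → Tendsto lam atTop atTop →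
    (renormalizedLimsup T lam \ {0}).Nontrivial

lemma HasAccumulatingRenormalizationsSet.hasNontrivialRenormalizations {T : Set ℝ}
    (hT : HasAccumulatingRenormalizationsSet T) : HasNontrivialRenormalizations T := by
  intro lam hpos hlam
  obtain ⟨⟨s, hs, hs0⟩, -⟩ := hT lam hpos hlam
  refine Set.not_subsingleton_iff.mp fun hsub => (hs 0).2 ?_
  have hconst : ∀ k, s k = s 0 := fun k => hsub (hs k) (hs 0)
  exact tendsto_nhds_unique (tendsto_const_nhds.congr fun k => (hconst k).symm) hs0

lemma exists_seq_tendsto_of_mem_seqLimsup {α : Type*} [TopologicalSpace α]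
    [FirstCountableTopology α] {Q : ℕ → Set α} {x : α} (hx : x ∈ seqLimsup Q) :
    ∃ (k : ℕ → ℕ) (y : ℕ → α), Tendsto k atTop atTop ∧ (∀ j, y j ∈ Q (k j)) ∧
      Tendsto y atTop (𝓝 x) := by
  have hfreq : ∃ᶠ p in (atTop : Filter ℕ) ×ˢ 𝓝 x, p.2 ∈ Q p.1 := by
    intro hev
    obtain ⟨P, hP, O, hO, hPO⟩ := eventually_prod_iff.mp hev
    obtain ⟨N, hN⟩ := eventually_atTop.mp hP
    obtain ⟨n, ⟨y, hyO, hyQ⟩, hn⟩ := (hx _ hO).exists_gt N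
    exact hPO (hN n hn.le) hyO hyQ
  obtain ⟨p, hp, hpQ⟩ := exists_seq_forall_of_frequently hfreq
  exact ⟨fun j => (p j).1, fun j => (p j).2, hp.fst, hpQ, hp.snd⟩

lemma isCompact_setOf_abs_add_sqrt_abs_eq_one :
    IsCompact {z : ℝ × ℝ | |z.1| + √|z.2| = 1} := by
  refine (isCompact_Icc.prod isCompact_Icc :
    IsCompact (Set.Icc (-1 : ℝ) 1 ×ˢ Set.Icc (-1 : ℝ) 1)).of_isClosed_subset
    (isClosed_eq (by fun_prop) continuous_const) fun z (hz : |z.1| + √|z.2| = 1) => ?_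
  have hfst : |z.1| ≤ 1 := by linarith [Real.sqrt_nonneg |z.2|]
  have hsnd : |z.2| ≤ 1 := Real.sqrt_le_one.mp (by linarith [abs_nonneg z.1])
  exact ⟨abs_le.mp hfst, abs_le.mp hsnd⟩

lemma exists_subseq_tendsto_rescaled_ne_zero {a b : ℕ → ℝ} (ha : Tendsto a atTop (𝓝 0))
    (hb : Tendsto b atTop (𝓝 0)) (hab : ∀ n, a n ≠ 0 ∨ b n ≠ 0) :
    ∃ (φ : ℕ → ℕ) (lam : ℕ → ℝ) (A B : ℝ), StrictMono φ ∧ (∀ n, 0 < lam n) ∧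
      Tendsto lam atTop atTop ∧ (A ≠ 0 ∨ B ≠ 0) ∧
      Tendsto (fun n => lam n * a (φ n)) atTop (𝓝 A) ∧
      Tendsto (fun n => lam n ^ 2 * b (φ n)) atTop (𝓝 B) := by
  set m : ℕ → ℝ := fun n => |a n| + √|b n|
  have hm_pos : ∀ n, 0 < m n := fun n => (hab n).elim
    (fun h => add_pos_of_pos_of_nonneg (abs_pos.mpr h) (Real.sqrt_nonneg _))
    (fun h => add_pos_of_nonneg_of_pos (abs_nonneg _) (Real.sqrt_pos.mpr (abs_pos.mpr h)))
  have hm_lim : Tendsto m atTop (𝓝 0) := by simpa using ha.abs.add hb.abs.sqrt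
  have hinv_lim : Tendsto m⁻¹ atTop atTop :=
    (tendsto_nhdsWithin_iff.mpr ⟨hm_lim, .of_forall hm_pos⟩).inv_tendsto_nhdsGT_zero
  have hmem : ∀ n, ((m n)⁻¹ * a n, (m n)⁻¹ ^ 2 * b n) ∈ {z : ℝ × ℝ | |z.1| + √|z.2| = 1} := by
    intro n
    have hinv : 0 < (m n)⁻¹ := inv_pos.mpr (hm_pos n)
    calc |(m n)⁻¹ * a n| + √|(m n)⁻¹ ^ 2 * b n| = (m n)⁻¹ * m n := by
          rw [abs_mul, abs_mul, abs_of_pos hinv, abs_of_pos (pow_pos hinv 2),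
            Real.sqrt_mul (sq_nonneg _), Real.sqrt_sq hinv.le, mul_add]
      _ = 1 := inv_mul_cancel₀ (hm_pos n).ne'
  obtain ⟨⟨A, B⟩, hAB, φ, hφ, hlim⟩ :=
    isCompact_setOf_abs_add_sqrt_abs_eq_one.tendsto_subseq hmem
  refine ⟨φ, fun n => (m (φ n))⁻¹, A, B, hφ, fun n => inv_pos.mpr (hm_pos _),
    hinv_lim.comp hφ.tendsto_atTop, ?_, hlim.fst_nhds, hlim.snd_nhds⟩
  by_contra! h
  simp [h.1, h.2] at hAB

lemma exists_mem_mul_sub_sq_mul_ne_zero {K : Type*} [Field K] {S : Set K}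
    (hS : (S \ {0}).Nontrivial) {A B : K} (hAB : A ≠ 0 ∨ B ≠ 0) :
    ∃ s ∈ S, s * A - s ^ 2 * B ≠ 0 := by
  obtain ⟨s, ⟨hs, hs0⟩, s', ⟨hs', hs'0⟩, hne⟩ := hS
  by_contra! hroot
  have hA {r : K} (hr : r ∈ S) (hr0 : r ≠ 0) : A = r * B :=
    mul_left_cancel₀ hr0 (by linear_combination hroot r hr)
  have hB : B = 0 := by
    by_contra hB
    exact hne (mul_right_cancel₀ hB ((hA hs hs0).symm.trans (hA hs' hs'0)))
  exact hAB.elim (fun h => h (by rw [hA hs hs0, hB, mul_zero])) fun h => h hB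

lemma HasNontrivialRenormalizations.exists_seq_tendsto_mul_sub_sq_mul {T : Set ℝ}
    (hT : HasNontrivialRenormalizations T) {a b : ℕ → ℝ} (ha : Tendsto a atTop (𝓝 0))
    (hb : Tendsto b atTop (𝓝 0)) (hab : ∀ n, a n ≠ 0 ∨ b n ≠ 0) :
    ∃ (k : ℕ → ℕ) (t : ℕ → ℝ) (s : ℝ), Tendsto k atTop atTop ∧ (∀ j, t j ∈ T) ∧ s ≠ 0 ∧
      Tendsto (fun j => t j * b (k j)) atTop (𝓝 0) ∧
      Tendsto (fun j => t j * a (k j) - t j ^ 2 * b (k j)) atTop (𝓝 s) := by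
  obtain ⟨φ, lam, A, B, hφ, hpos, hlam, hAB, hA, hB⟩ :=
    exists_subseq_tendsto_rescaled_ne_zero ha hb hab
  obtain ⟨σ, hσ, hne⟩ := exists_mem_mul_sub_sq_mul_ne_zero (hT lam hpos hlam) hAB
  obtain ⟨k, τ, hk, hτT, hτ⟩ := exists_seq_tendsto_of_mem_seqLimsup hσ
  choose t htT ht using hτT
  have hlam_ne : ∀ j, lam (k j) ≠ 0 := fun j => (hpos _).ne'
  refine ⟨φ ∘ k, t, σ * A - σ ^ 2 * B, hφ.tendsto_atTop.comp hk, htT, hne, ?_, ?_⟩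
  · have hinv : Tendsto (fun j => (lam (k j))⁻¹) atTop (𝓝 0) := (hlam.comp hk).inv_tendsto_atTop
    have hlim := (hτ.mul hinv).mul (hB.comp hk)
    rw [mul_zero, zero_mul] at hlim
    refine hlim.congr fun j => ?_
    have := hlam_ne j
    simp only [← ht, Function.comp_apply]
    field_simp
  · refine ((hτ.mul (hA.comp hk)).sub ((hτ.pow 2).mul (hB.comp hk))).congr fun j => ?_
    have := hlam_ne j
    simp only [← ht, Function.comp_apply]
    field_simp

end Renormalization

section RealForm

open scoped Topology

variable {n : Type*} [Fintype n] [DecidableEq n]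

/-- Entrywise complex conjugation on `SL(n,ℂ)`, the involution with fixed points `SL(n,ℝ)`. -/
def conjSL : SpecialLinearGroup n ℂ →* SpecialLinearGroup n ℂ :=
  SpecialLinearGroup.map (starRingEnd ℂ)

/-- The inclusion of `SL(n,ℝ)` in `SL(n,ℂ)`. -/
def ofRealSL : SpecialLinearGroup n ℝ →* SpecialLinearGroup n ℂ :=
  SpecialLinearGroup.map (algebraMap ℝ ℂ)

/-- The Cartan map `g ↦ g * ḡ⁻¹` of the symmetric space `SL(n,ℂ)/SL(n,ℝ)`. It separates the cosets
`g SL(n,ℝ)`, which allows convergence modulo `SL(n,ℝ)` to be tested on matrices. -/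
def cartanMap (g : SpecialLinearGroup n ℂ) : SpecialLinearGroup n ℂ :=
  g * (conjSL g)⁻¹

lemma conjSL_apply (g : SpecialLinearGroup n ℂ) (i j : n) :
    conjSL g i j = starRingEnd ℂ (g i j) := rfl

lemma conjSL_conjSL (g : SpecialLinearGroup n ℂ) : conjSL (conjSL g) = g := by
  ext i j
  exact Complex.conj_conj _

lemma conjSL_cartanMap (g : SpecialLinearGroup n ℂ) :
    conjSL (cartanMap g) = (cartanMap g)⁻¹ := by
  simp [cartanMap, conjSL_conjSL]

lemma cartanMap_one : cartanMap (1 : SpecialLinearGroup n ℂ) = 1 := by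
  simp [cartanMap]

lemma cartanMap_mul (g h : SpecialLinearGroup n ℂ) :
    cartanMap (g * h) = g * cartanMap h * (conjSL g)⁻¹ := by
  simp [cartanMap, mul_assoc]

lemma continuous_cartanMap : Continuous (cartanMap : SpecialLinearGroup n ℂ → _) :=
  continuous_id.mul (Complex.continuous_conj.specialLinearGroup_map).inv

lemma mem_range_ofRealSL_of_conjSL_eq {g : SpecialLinearGroup n ℂ} (hg : conjSL g = g) :
    g ∈ (ofRealSL (n := n)).range := by
  have hre : (algebraMap ℝ ℂ).mapMatrix ((g : Matrix n n ℂ).map Complex.re) = g := by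
    ext i j
    exact Complex.conj_eq_iff_re.mp (by rw [← conjSL_apply, hg])
  refine ⟨⟨(g : Matrix n n ℂ).map Complex.re, ?_⟩, Subtype.ext hre⟩
  apply (algebraMap ℝ ℂ).injective
  rw [RingHom.map_det, hre, Matrix.SpecialLinearGroup.det_coe, map_one]

lemma inv_mul_mem_range_ofRealSL_of_cartanMap_eq {g v : SpecialLinearGroup n ℂ}
    (h : cartanMap g = cartanMap v) : v⁻¹ * g ∈ (ofRealSL (n := n)).range := by
  apply mem_range_ofRealSL_of_conjSL_eq
  have hg : g = v * (conjSL v)⁻¹ * conjSL g := eq_mul_of_mul_inv_eq h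
  rw [map_mul, map_inv]
  conv_rhs => rw [hg]
  group

lemma exists_coe_eq_smul_of_det_pos [Nonempty n] {A : Matrix n n ℝ} (hA : 0 < A.det) :
    ∃ r : SpecialLinearGroup n ℝ, (r : Matrix n n ℝ) = (A.det ^ (Fintype.card n : ℝ)⁻¹)⁻¹ • A := by
  refine ⟨⟨_, ?_⟩, rfl⟩
  rw [det_smul, inv_pow, Real.rpow_inv_natCast_pow hA.le Fintype.card_ne_zero,
    inv_mul_cancel₀ hA.ne']

/-- If the right-hand side is close to `v`, the real matrix `Re (g⁻¹ * v)`, once scaled to have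
determinant `1`, moves `g` close to `v`. -/
lemma mul_re_inv_mul (g v : SpecialLinearGroup n ℂ) :
    (g : Matrix n n ℂ) * (algebraMap ℝ ℂ).mapMatrix ((↑(g⁻¹ * v) : Matrix n n ℂ).map Complex.re) =
      (2 : ℂ)⁻¹ • (↑v + ↑(cartanMap g * conjSL v)) := by
  have hre : (algebraMap ℝ ℂ).mapMatrix ((↑(g⁻¹ * v) : Matrix n n ℂ).map Complex.re) =
      (2 : ℂ)⁻¹ • (↑(g⁻¹ * v) + ↑(conjSL (g⁻¹ * v))) := by
    ext i j
    exact (Complex.re_eq_add_conj _).trans (div_eq_inv_mul _ _)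
  rw [hre, Matrix.mul_smul, mul_add, ← Matrix.SpecialLinearGroup.coe_mul,
    ← Matrix.SpecialLinearGroup.coe_mul, mul_inv_cancel_left, map_mul, map_inv, ← mul_assoc,
    cartanMap]

lemma exists_tendsto_mul_ofRealSL [Nonempty n] {ι : Type*} {l : Filter ι}
    {g : ι → SpecialLinearGroup n ℂ} {v : SpecialLinearGroup n ℂ}
    (h : Tendsto (fun i => cartanMap (g i)) l (𝓝 (cartanMap v))) :
    ∃ r : ι → SpecialLinearGroup n ℝ, Tendsto (fun i => g i * ofRealSL (r i)) l (𝓝 v) := by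
  set R : ι → Matrix n n ℝ := fun i => (↑((g i)⁻¹ * v) : Matrix n n ℂ).map Complex.re
  set C := (algebraMap ℝ ℂ).mapMatrix (m := n)
  have hgR : Tendsto (fun i => (g i : Matrix n n ℂ) * C (R i)) l (𝓝 ↑v) := by
    have hcont : Continuous fun M : SpecialLinearGroup n ℂ =>
        (2 : ℂ)⁻¹ • ((v : Matrix n n ℂ) + ↑(M * conjSL v)) := by
      have := continuous_subtype_val.comp (continuous_mul_const (conjSL v))
      fun_prop
    have hval : (2 : ℂ)⁻¹ • ((v : Matrix n n ℂ) + ↑(cartanMap v * conjSL v)) = v := by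
      rw [cartanMap, inv_mul_cancel_right, ← two_smul ℂ, inv_smul_smul₀ two_ne_zero]
    simpa only [mul_re_inv_mul, Function.comp_def, hval, R, C] using (hcont.tendsto _).comp h
  have hdet : Tendsto (fun i => (R i).det) l (𝓝 1) := by
    have hdetC : ∀ i, ((g i : Matrix n n ℂ) * C (R i)).det.re = (R i).det := fun i => by
      rw [det_mul, Matrix.SpecialLinearGroup.det_coe, one_mul, ← RingHom.map_det]
      exact Complex.ofReal_re _
    have hre : Continuous fun M : Matrix n n ℂ => M.det.re := by fun_prop
    simpa only [Function.comp_def, hdetC, Matrix.SpecialLinearGroup.det_coe, Complex.one_re]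
      using (hre.tendsto _).comp hgR
  choose! r hr using fun i => exists_coe_eq_smul_of_det_pos (A := R i)
  refine ⟨r, tendsto_subtype_rng.mpr ?_⟩
  have hroot : Tendsto (fun i => ((R i).det ^ (Fintype.card n : ℝ)⁻¹)⁻¹) l (𝓝 1) := by
    simpa using (hdet.rpow_const (.inl one_ne_zero)).inv₀ (by simp)
  have hlim := hroot.smul hgR
  rw [one_smul] at hlim
  refine hlim.congr' ?_
  filter_upwards [hdet.eventually (lt_mem_nhds one_pos)] with i hi
  have hC : (ofRealSL (r i) : Matrix n n ℂ) = ((R i).det ^ (Fintype.card n : ℝ)⁻¹)⁻¹ • C (R i) := by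
    change C (r i) = _
    rw [hr i hi]
    ext a b
    simp [C]
  rw [Matrix.SpecialLinearGroup.coe_mul, hC, Matrix.mul_smul]

end RealForm

section Shear

open scoped Topology

open Complex (I)

lemma uMat_zero : uMat 0 = 1 := by
  ext i j
  fin_cases i <;> fin_cases j <;> simp [uMat]

lemma uMat_mul (z w : ℂ) : uMat z * uMat w = uMat (z + w) := by
  ext i j
  rw [Matrix.SpecialLinearGroup.coe_mul]
  fin_cases i <;> fin_cases j <;> simp [uMat, Matrix.mul_apply, add_comm]

lemma uMat_inv (z : ℂ) : (uMat z)⁻¹ = uMat (-z) := by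
  rw [inv_eq_iff_mul_eq_one, uMat_mul, add_neg_cancel, uMat_zero]

lemma conjSL_uMat (z : ℂ) : conjSL (uMat z) = uMat (starRingEnd ℂ z) := by
  ext i j
  rw [conjSL_apply]
  fin_cases i <;> fin_cases j <;> simp [uMat]

lemma cartanMap_uMat (z : ℂ) : cartanMap (uMat z) = uMat ((2 * z.im : ℝ) * I) := by
  rw [cartanMap, conjSL_uMat, uMat_inv, uMat_mul, ← sub_eq_add_neg, Complex.sub_conj]

lemma cartanMap_uMat_neg_mul (t : ℝ) (g : SL2C) :
    cartanMap (uMat (-t) * g) = uMat (-t) * cartanMap g * uMat t := by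
  rw [cartanMap_mul, conjSL_uMat, uMat_inv]
  simp

lemma coe_cartanMap_fin_two (g : SL2C) :
    (cartanMap g : Matrix (Fin 2) (Fin 2) ℂ) =
      !![cartanMap g 0 0, (cartanMap g 0 1).im * I;
        (cartanMap g 1 0).im * I, starRingEnd ℂ (cartanMap g 0 0)] := by
  have hinv : ∀ i j, starRingEnd ℂ (cartanMap g i j) = (cartanMap g).1.adjugate i j := fun i j => by
    rw [← conjSL_apply, conjSL_cartanMap, Matrix.SpecialLinearGroup.coe_inv]
  have himag {z : ℂ} (hz : starRingEnd ℂ z = -z) : z = z.im * I := by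
    have hre : z.re = 0 := self_eq_neg.mp (congrArg Complex.re hz)
    apply Complex.ext <;> simp [hre]
  simp only [Matrix.adjugate_fin_two] at hinv
  rw [hinv 0 0, ← himag (hinv 0 1), ← himag (hinv 1 0)]
  exact Matrix.eta_fin_two _

/-- The coefficient `a` of the polynomial `t * a - t ^ 2 * b` which measures how far, in the
direction of `V`, the coset `u_{-t} g H` has moved away from `H` for `g` close to `e`. -/
def linearShear (g : SL2C) : ℝ := (cartanMap g 0 0).im

/-- The coefficient `b` of the polynomial `t * a - t ^ 2 * b` described in `linearShear`, halved
because conjugation by `u_{-t}` adds `2 * (t * a - t ^ 2 * b)` to the upper right entry. -/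
def quadraticShear (g : SL2C) : ℝ := (cartanMap g 1 0).im / 2

lemma coe_cartanMap_uMat_neg_mul (t : ℝ) (g : SL2C) :
    (cartanMap (uMat (-t) * g) : Matrix (Fin 2) (Fin 2) ℂ) =
      !![cartanMap g 0 0 - (2 * (t * quadraticShear g) : ℝ) * I,
          ((cartanMap g 0 1).im + 2 * (t * linearShear g - t ^ 2 * quadraticShear g) : ℝ) * I;
        (2 * quadraticShear g : ℝ) * I,
          starRingEnd ℂ (cartanMap g 0 0) + (2 * (t * quadraticShear g) : ℝ) * I] := by
  rw [cartanMap_uMat_neg_mul, Matrix.SpecialLinearGroup.coe_mul, Matrix.SpecialLinearGroup.coe_mul,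
    linearShear, quadraticShear]
  have hcoe := coe_cartanMap_fin_two g
  generalize cartanMap g 0 0 = p, (cartanMap g 0 1).im = β, (cartanMap g 1 0).im = γ at hcoe ⊢
  have hsub : p - starRingEnd ℂ p = 2 * p.im * I := mod_cast Complex.sub_conj p
  rw [hcoe]
  push_cast
  simp only [uMat, Matrix.mul_fin_two, EmbeddingLike.apply_eq_iff_eq, Matrix.vecCons_inj, and_true]
  exact ⟨⟨by ring, by linear_combination (t : ℂ) * hsub⟩, by ring, by ring⟩

lemma continuous_cartanMap_apply (i j : Fin 2) : Continuous fun g : SL2C => cartanMap g i j :=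
  (continuous_subtype_val.comp continuous_cartanMap).matrix_elem i j

lemma continuous_linearShear : Continuous linearShear :=
  Complex.continuous_im.comp (continuous_cartanMap_apply 0 0)

lemma continuous_quadraticShear : Continuous quadraticShear :=
  (Complex.continuous_im.comp (continuous_cartanMap_apply 1 0)).div_const 2

lemma linearShear_one : linearShear 1 = 0 := by
  simp [linearShear, cartanMap_one]

lemma quadraticShear_one : quadraticShear 1 = 0 := by
  simp [quadraticShear, cartanMap_one]

lemma tendsto_cartanMap_uMat_neg_mul {ι : Type*} {l : Filter ι} {g : ι → SL2C} {t : ι → ℝ} {s : ℝ}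
    (hg : Tendsto g l (𝓝 1)) (hquad : Tendsto (fun i => t i * quadraticShear (g i)) l (𝓝 0))
    (hpoly : Tendsto (fun i => t i * linearShear (g i) - t i ^ 2 * quadraticShear (g i)) l (𝓝 s)) :
    Tendsto (fun i => cartanMap (uMat (-t i) * g i)) l (𝓝 (cartanMap (uMat (s * I)))) := by
  have hentry (i j : Fin 2) :
      Tendsto (fun k => cartanMap (g k) i j) l (𝓝 ((1 : SL2C) i j)) := by
    simpa only [cartanMap_one, Function.comp_def]
      using ((continuous_cartanMap_apply i j).tendsto 1).comp hg
  have hcoeff : Tendsto (fun k => quadraticShear (g k)) l (𝓝 0) := by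
    simpa only [quadraticShear_one, Function.comp_def]
      using (continuous_quadraticShear.tendsto 1).comp hg
  have hofReal {f : ι → ℝ} {c : ℝ} (hf : Tendsto f l (𝓝 c)) :
      Tendsto (fun k => (f k : ℂ) * I) l (𝓝 (c * I)) := hf.ofReal.mul_const I
  have him : Tendsto (fun k => (cartanMap (g k) 0 1).im) l (𝓝 0) :=
    (Complex.continuous_im.tendsto _).comp (hentry 0 1)
  have hconj : Tendsto (fun k => starRingEnd ℂ (cartanMap (g k) 0 0)) l (𝓝 1) := by
    simpa only [Matrix.SpecialLinearGroup.coe_one, Matrix.one_apply_eq, map_one, Function.comp_def]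
      using (Complex.continuous_conj.tendsto _).comp (hentry 0 0)
  refine tendsto_subtype_rng.mpr (tendsto_pi_nhds.mpr fun i => tendsto_pi_nhds.mpr fun j => ?_)
  simp_rw [cartanMap_uMat, Complex.im_ofReal_mul, Complex.I_im, mul_one, coe_cartanMap_uMat_neg_mul]
  fin_cases i <;> fin_cases j
  · simpa [uMat] using (hentry 0 0).sub (hofReal (hquad.const_mul 2))
  · simpa [uMat] using hofReal (him.add (hpoly.const_mul 2))
  · simpa [uMat] using hofReal (hcoeff.const_mul 2)
  · simpa [uMat] using hconj.add (hofReal (hquad.const_mul 2))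

lemma eventually_exists_cartanMap_eq_of_shear_eq_zero :
    ∀ᶠ g in 𝓝 (1 : SL2C), linearShear g = 0 → quadraticShear g = 0 →
      ∃ s : ℝ, cartanMap g = cartanMap (uMat (s * I)) := by
  have hpos : ∀ᶠ g in 𝓝 (1 : SL2C), 0 < (cartanMap g 0 0).re :=
    (Complex.continuous_re.comp (continuous_cartanMap_apply 0 0)).tendsto 1 |>.eventually
      (lt_mem_nhds (by simp [cartanMap_one]))
  filter_upwards [hpos] with g hre hlin hquad
  have hcoe := coe_cartanMap_fin_two g
  have him : (cartanMap g 1 0).im = 0 := by simpa [quadraticShear] using hquad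
  have hdet := (cartanMap g).det_coe
  rw [hcoe, him, Matrix.det_fin_two_of, Complex.mul_conj, Complex.normSq_apply,
    show (cartanMap g 0 0).im = 0 from hlin] at hdet
  have hsq : (cartanMap g 0 0).re * (cartanMap g 0 0).re = 1 := by
    simpa using congrArg Complex.re hdet
  have hone : cartanMap g 0 0 = 1 := Complex.ext (by rw [Complex.one_re]; nlinarith) hlin
  refine ⟨(cartanMap g 0 1).im / 2, Subtype.ext ?_⟩
  rw [hcoe, cartanMap_uMat, him, hone]
  simp [uMat, mul_div_cancel₀]

end Shear

section ProjectiveSpecialLinearGroup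

open scoped Topology

instance : IsTopologicalGroup SL2C :=
  Matrix.SpecialLinearGroup.topologicalGroup

instance : IsTopologicalGroup PSL2C :=
  QuotientGroup.instIsTopologicalGroup (Subgroup.center SL2C)

instance : FirstCountableTopology SL2C :=
  haveI : FirstCountableTopology (Matrix (Fin 2) (Fin 2) ℂ) :=
    inferInstanceAs (FirstCountableTopology (Fin 2 → Fin 2 → ℂ))
  TopologicalSpace.Subtype.firstCountableTopology _

lemma continuous_pr : Continuous pr := continuous_quotient_mk'

lemma isOpenMap_pr : IsOpenMap pr := QuotientGroup.isOpenMap_coe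

/-- The subgroup `H` of `PSL(2,ℂ)`, with carrier `Hset`. -/
def realSubgroup : Subgroup PSL2C := (ofRealSL (n := Fin 2)).range.map pr

lemma coe_realSubgroup : (realSubgroup : Set PSL2C) = Hset := by
  ext x
  simp [realSubgroup, Hset, ofRealSL, eq_comm]

lemma pr_ofRealSL_mem (r : SpecialLinearGroup (Fin 2) ℝ) : pr (ofRealSL r) ∈ realSubgroup :=
  Subgroup.mem_map_of_mem pr ⟨r, rfl⟩

lemma uu_mem_realSubgroup (t : ℝ) : uu t ∈ realSubgroup := by
  refine Subgroup.mem_map_of_mem pr (mem_range_ofRealSL_of_conjSL_eq ?_)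
  rw [conjSL_uMat, Complex.conj_ofReal]

lemma uu_neg (t : ℝ) : uu (-t) = (uu t)⁻¹ := by
  rw [uu, uu, ← map_inv, uMat_inv, Complex.ofReal_neg]

lemma commute_uu_vv (t s : ℝ) : Commute (uu t) (vv s) := by
  rw [Commute, SemiconjBy, uu, vv, ← map_mul, ← map_mul, uMat_mul, uMat_mul, add_comm]

lemma vv_zero : vv 0 = 1 := by
  rw [vv, Complex.ofReal_zero, zero_mul, uMat_zero, map_one]

lemma vv_ne_one {s : ℝ} (hs : s ≠ 0) : vv s ≠ 1 := by
  intro h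
  obtain ⟨r, -, hr⟩ :=
    Matrix.SpecialLinearGroup.mem_center_iff.mp ((QuotientGroup.eq_one_iff _).mp h)
  have hentry : (0 : ℂ) = s * Complex.I := by simpa [uMat] using congrFun (congrFun hr 0) 1
  exact mul_ne_zero (Complex.ofReal_ne_zero.mpr hs) Complex.I_ne_zero hentry.symm

lemma inv_vv_mul_pr_mem_realSubgroup {g : SL2C} {s : ℝ}
    (h : cartanMap g = cartanMap (uMat (s * Complex.I))) : (vv s)⁻¹ * pr g ∈ realSubgroup := by
  rw [vv, ← map_inv, ← map_mul]
  exact Subgroup.mem_map_of_mem pr (inv_mul_mem_range_ofRealSL_of_cartanMap_eq h)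

lemma HasNontrivialRenormalizations.exists_seq_tendsto_vv {T : Set ℝ}
    (hT : HasNontrivialRenormalizations T) {g : ℕ → SL2C} (hg : Tendsto g atTop (𝓝 1))
    (hshear : ∀ n, linearShear (g n) ≠ 0 ∨ quadraticShear (g n) ≠ 0) :
    ∃ (k : ℕ → ℕ) (t : ℕ → ℝ) (h : ℕ → PSL2C) (s : ℝ), s ≠ 0 ∧ (∀ j, t j ∈ T) ∧
      (∀ j, h j ∈ realSubgroup) ∧
      Tendsto (fun j => (uu (t j))⁻¹ * pr (g (k j)) * h j) atTop (𝓝 (vv s)) := by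
  have hlin : Tendsto (fun n => linearShear (g n)) atTop (𝓝 0) :=
    linearShear_one ▸ (continuous_linearShear.tendsto 1).comp hg
  have hquad : Tendsto (fun n => quadraticShear (g n)) atTop (𝓝 0) :=
    quadraticShear_one ▸ (continuous_quadraticShear.tendsto 1).comp hg
  obtain ⟨k, t, s, hk, htT, hs, htb, hpoly⟩ :=
    hT.exists_seq_tendsto_mul_sub_sq_mul hlin hquad hshear
  obtain ⟨r, hr⟩ :=
    exists_tendsto_mul_ofRealSL (tendsto_cartanMap_uMat_neg_mul (hg.comp hk) htb hpoly)
  refine ⟨k, t, fun j => pr (ofRealSL (r j)), s, hs, htT, fun j => pr_ofRealSL_mem _, ?_⟩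
  refine ((continuous_pr.tendsto _).comp hr).congr fun j => ?_
  rw [← uu_neg, uu, Complex.ofReal_neg, ← map_mul, ← map_mul]
  rfl

end ProjectiveSpecialLinearGroup

section HomogeneousSpace

open scoped Topology

variable {Γ}

lemma mkX_surjective : Function.Surjective (mkX Γ) := Quotient.mk''_surjective

lemma continuous_mkX : Continuous (mkX Γ) := continuous_quotient_mk'

lemma isOpenMap_mkX : IsOpenMap (mkX Γ) := isOpenMap_quotient_mk'_mul (Γ := Γ) (T := PSL2C)

lemma act_mkX (a g : PSL2C) : act Γ (mkX Γ a) g = mkX Γ (a * g) := rfl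

lemma act_act (x : XΓ Γ) (g h : PSL2C) : act Γ (act Γ x g) h = act Γ x (g * h) := by
  obtain ⟨a, rfl⟩ := mkX_surjective x
  simp only [act_mkX, mul_assoc]

lemma act_one (x : XΓ Γ) : act Γ x 1 = x := by
  obtain ⟨a, rfl⟩ := mkX_surjective x
  rw [act_mkX, mul_one]

lemma continuous_act : Continuous fun p : XΓ Γ × PSL2C => act Γ p.1 p.2 := by
  have hquot : Topology.IsQuotientMap (Prod.map (mkX Γ) (id : PSL2C → PSL2C)) :=
    (isOpenMap_mkX.prodMap .id).isQuotientMap (continuous_mkX.prodMap continuous_id)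
      (mkX_surjective.prodMap Function.surjective_id)
  exact hquot.continuous_iff.mpr (continuous_mkX.comp continuous_mul)

lemma continuous_act_const (g : PSL2C) : Continuous fun x : XΓ Γ => act Γ x g :=
  continuous_act.comp (continuous_id.prodMk continuous_const)

lemma isOpenMap_act (x : XΓ Γ) : IsOpenMap (act Γ x) := by
  obtain ⟨a, rfl⟩ := mkX_surjective x
  exact isOpenMap_mkX.comp (isOpenMap_mul_left a)

lemma frequently_act_pr_mem {x : XΓ Γ} {Z : Set (XΓ Γ)} (hx : x ∈ closure Z) :
    ∃ᶠ g in 𝓝 (1 : SL2C), act Γ x (pr g) ∈ Z := by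
  have hopen : IsOpenMap fun g : SL2C => act Γ x (pr g) := (isOpenMap_act x).comp isOpenMap_pr
  refine mem_closure_iff_frequently.mp (hopen.preimage_closure_subset_closure_preimage ?_)
  rwa [Set.mem_preimage, map_one, act_one]

lemma isClosed_setOf_exists_act_mem {K X : Set (XΓ Γ)} (hK : IsCompact K) (hX : IsClosed X) :
    IsClosed {g | ∃ x ∈ K, act Γ x g ∈ X} := by
  have : CompactSpace K := isCompact_iff_compactSpace.mp hK
  have hclosed : IsClosed {p : K × PSL2C | act Γ p.1 p.2 ∈ X} :=
    hX.preimage (continuous_act.comp (continuous_subtype_val.prodMap continuous_id))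
  convert isClosedMap_snd_of_compactSpace _ hclosed using 1
  ext g
  simp

/-- Closure of a set under right translation by elements of `S`, i.e. `X·S ⊆ X`. For a subgroup `S`
this is `S`-invariance. -/
def StableUnder (S : Set PSL2C) (X : Set (XΓ Γ)) : Prop :=
  ∀ ⦃x⦄, x ∈ X → ∀ ⦃s⦄, s ∈ S → act Γ x s ∈ X

lemma StableUnder.closure {S : Set PSL2C} {X : Set (XΓ Γ)} (hX : StableUnder S X) :
    StableUnder S (closure X) := fun _ hx s hs =>
  map_mem_closure (f := fun x => act Γ x s) (continuous_act_const s) hx fun _ hz => hX hz hs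

lemma mem_orb_of_act_mem_orb {P : Subgroup PSL2C} {x y : XΓ Γ} {p : PSL2C} (hp : p ∈ P)
    (h : act Γ x p ∈ orb Γ y P) : x ∈ orb Γ y P := by
  obtain ⟨q, hq, hqx⟩ := h
  refine ⟨q * p⁻¹, mul_mem hq (inv_mem hp), ?_⟩
  change act Γ y (q * p⁻¹) = x
  rw [← act_act, show act Γ y q = act Γ x p from hqx, act_act, mul_inv_cancel, act_one]

lemma mem_closure_diff_orb {P : Subgroup PSL2C} {X : Set (XΓ Γ)} {y : XΓ Γ} (hX : IsClosed X)
    (hstable : StableUnder P X) (hnc : ¬ IsClosed (X \ orb Γ y P)) :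
    y ∈ closure (X \ orb Γ y P) := by
  have hdiff : StableUnder P (X \ orb Γ y P) := fun x hx p hp =>
    ⟨hstable hx.1 hp, fun h => hx.2 (mem_orb_of_act_mem_orb hp h)⟩
  obtain ⟨z, hz, hz'⟩ := Set.not_subset.mp fun h => hnc (isClosed_of_closure_subset h)
  have hzX : z ∈ X := closure_minimal Set.sdiff_subset hX hz
  obtain ⟨p, hp, rfl⟩ := not_not.mp fun h => hz' ⟨hzX, h⟩
  simpa only [act_act, mul_inv_cancel, act_one] using hdiff.closure hz (inv_mem hp)

end HomogeneousSpace

section Translates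

open scoped Topology

variable {Γ}

lemma UMinimalWrt.act_uu_mem {Y W : Set (XΓ Γ)} (hY : UMinimalWrt Γ Y W) {y : XΓ Γ} (hy : y ∈ Y)
    (t : ℝ) : act Γ y (uu t) ∈ Y :=
  hY.2.1.subset ⟨y, hy, t, rfl⟩

lemma UMinimalWrt.act_vv_mem {X Y W : Set (XΓ Γ)} (hY : UMinimalWrt Γ Y W) (hX : IsClosed X)
    (hstable : StableUnder Uset X) {y : XΓ Γ} (hy : y ∈ Y ∩ W) {s : ℝ} (hs : act Γ y (vv s) ∈ X)
    {z : XΓ Γ} (hz : z ∈ Y) : act Γ z (vv s) ∈ X := by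
  refine closure_minimal ?_ (hX.preimage (continuous_act_const (vv s))) (hY.2.2.2 y hy hz)
  rintro _ ⟨t, rfl⟩
  rw [Set.mem_preimage, act_act, commute_uu_vv, ← act_act]
  exact hstable hs ⟨t, rfl⟩

lemma ne_zero_and_act_vv_mem_of_cartanMap_eq {X : Set (XΓ Γ)} (hstable : StableUnder realSubgroup X)
    {y : XΓ Γ} {g : SL2C} (hg : act Γ y (pr g) ∈ X \ orb Γ y realSubgroup) {s : ℝ}
    (h : cartanMap g = cartanMap (uMat (s * Complex.I))) : s ≠ 0 ∧ act Γ y (vv s) ∈ X := by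
  have hmem := inv_vv_mul_pr_mem_realSubgroup h
  constructor
  · rintro rfl
    rw [vv_zero, inv_one, one_mul] at hmem
    exact hg.2 ⟨pr g, hmem, rfl⟩
  · simpa [act_act] using hstable hg.1 (inv_mem hmem)

lemma exists_act_vv_mem_of_tendsto {K X : Set (XΓ Γ)} (hK : IsCompact K) (hX : IsClosed X)
    (hstable : StableUnder realSubgroup X) {y : XΓ Γ}
    (hret : HasNontrivialRenormalizations {t | act Γ y (uu t) ∈ K}) {g : ℕ → SL2C}
    (hg : Tendsto g atTop (𝓝 1)) (hgX : ∀ n, act Γ y (pr (g n)) ∈ X)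
    (hshear : ∀ n, linearShear (g n) ≠ 0 ∨ quadraticShear (g n) ≠ 0) :
    ∃ x ∈ K, ∃ s ≠ 0, act Γ x (vv s) ∈ X := by
  obtain ⟨k, t, h, s, hs, htK, hh, hlim⟩ := hret.exists_seq_tendsto_vv hg hshear
  obtain ⟨x, hx, hxs⟩ := (isClosed_setOf_exists_act_mem hK hX).mem_of_tendsto hlim <|
    .of_forall fun j => ⟨_, htK j, by
      simpa only [act_act, mul_assoc, mul_inv_cancel_left] using hstable (hgX (k j)) (hh j)⟩
  exact ⟨x, hx, s, hs, hxs⟩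

lemma exists_act_vv_mem {K X : Set (XΓ Γ)} (hK : IsCompact K) (hX : IsClosed X)
    (hstable : StableUnder realSubgroup X) {y : XΓ Γ} (hy : y ∈ K)
    (hret : HasNontrivialRenormalizations {t | act Γ y (uu t) ∈ K})
    (hcl : y ∈ closure (X \ orb Γ y realSubgroup)) :
    ∃ x ∈ K, ∃ s ≠ 0, act Γ x (vv s) ∈ X := by
  have hfreq := frequently_act_pr_mem hcl
  by_cases hshear : ∃ᶠ g in 𝓝 (1 : SL2C), act Γ y (pr g) ∈ X \ orb Γ y realSubgroup ∧
      (linearShear g ≠ 0 ∨ quadraticShear g ≠ 0)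
  · obtain ⟨g, hg, hgX⟩ := exists_seq_forall_of_frequently hshear
    exact exists_act_vv_mem_of_tendsto hK hX hstable hret hg (fun n => (hgX n).1.1)
      fun n => (hgX n).2
  · obtain ⟨g, ⟨hgX, hg⟩, hzero⟩ := ((hfreq.and_eventually
      (not_frequently.mp hshear)).and_eventually
        eventually_exists_cartanMap_eq_of_shear_eq_zero).exists
    obtain ⟨hlin, hquad⟩ : linearShear g = 0 ∧ quadraticShear g = 0 := by tauto
    obtain ⟨s, hs⟩ := hzero hlin hquad
    obtain ⟨hs0, hmem⟩ := ne_zero_and_act_vv_mem_of_cartanMap_eq hstable hgX hs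
    exact ⟨y, hy, s, hs0, hmem⟩

end Translates

theorem one_translate_of_relative_minimal_set_in_X_general
    (Γ : Subgroup PSL2C)
    (X : Set (XΓ Γ)) (hXclosed : IsClosed X)
    (hXinv : {y | ∃ x ∈ X, ∃ h ∈ Hset, y = act Γ x h} = X)
    (W : Set (XΓ Γ)) (hWcpt : IsCompact W)
    (Y : Set (XΓ Γ)) (hY : UMinimalWrt Γ Y W)
    (y₀ : XΓ Γ) (hy₀ : y₀ ∈ Y ∩ W)
    (hret : HasNontrivialRenormalizations {t : ℝ | act Γ y₀ (uu t) ∈ W})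
    (hnc : ¬ IsClosed (X \ orb Γ y₀ Hset)) :
    ∃ v ∈ Vset, v ≠ 1 ∧ ∀ y ∈ Y, act Γ y v ∈ X := by
  rw [← coe_realSubgroup] at hXinv hnc
  have hstable : StableUnder realSubgroup X := fun x hx h hh => hXinv.subset ⟨x, hx, h, hh, rfl⟩
  have hretY : HasNontrivialRenormalizations {t | act Γ y₀ (uu t) ∈ Y ∩ W} := by
    simpa only [Set.mem_inter_iff, hY.act_uu_mem hy₀.1, true_and] using hret
  obtain ⟨y, hy, s, hs, hys⟩ := exists_act_vv_mem (hWcpt.inter_left hY.1) hXclosed hstable hy₀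
    hretY (mem_closure_diff_orb hXclosed hstable hnc)
  have hstableU : StableUnder Uset X := fun x hx _ ⟨t, ht⟩ =>
    hstable hx (ht ▸ uu_mem_realSubgroup t)
  exact ⟨vv s, ⟨s, rfl⟩, vv_ne_one hs, fun z hz => hY.act_vv_mem hXclosed hstableU hy hys hz⟩

/-- One translate of a relatively minimal set inside `X`: under the stated
recurrence hypotheses, if `Y ⊆ X` is `U`-minimal with respect to `W` and
`X ∖ y₀H` is not closed for some `y₀ ∈ Y ∩ W`, then `Y·v ⊆ X` for some
nontrivial `v ∈ V`. -/
theorem one_translate_of_relative_minimal_set_in_X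
    (Γ : Subgroup PSL2C) (hdisc : DiscreteTopology Γ)
    (X : Set (XΓ Γ)) (hXclosed : IsClosed X)
    (hXinv : {y | ∃ x ∈ X, ∃ h ∈ Hset, y = act Γ x h} = X)
    (hXnoperiodic : ¬ ∃ x ∈ X, ∃ t : ℝ, t ≠ 0 ∧ act Γ x (uu t) = x)
    (W : Set (XΓ Γ)) (hWcpt : IsCompact W) (hXW : (X ∩ W).Nonempty)
    (hret : ∀ y ∈ X ∩ W,
      HasAccumulatingRenormalizationsSet {t : ℝ | act Γ y (uu t) ∈ W})
    (Y : Set (XΓ Γ)) (hYX : Y ⊆ X) (hY : UMinimalWrt Γ Y W)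
    (y₀ : XΓ Γ) (hy₀ : y₀ ∈ Y ∩ W) (hnc : ¬ IsClosed (X \ orb Γ y₀ Hset)) :
    ∃ v ∈ Vset, v ≠ 1 ∧ ∀ y ∈ Y, act Γ y v ∈ X :=
  one_translate_of_relative_minimal_set_in_X_general Γ X hXclosed hXinv W hWcpt Y hY y₀ hy₀
    (hret y₀ ⟨hYX hy₀.1, hy₀.2⟩).hasNontrivialRenormalizations hnc


end
end

section
/- In G = PSL(2,ℂ), one has {g ∈ G : g u_t g⁻¹ ∈ H for all t ∈ ℝ} = 𝒩V = {nv : n ∈ 𝒩, v ∈ V}, where 𝒩 denotes the normalizer of H in G. -/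
open scoped MatrixGroups
open Matrix Filter

noncomputable section

variable (Γ : Subgroup PSL2C)

/-- The normalizer `𝒩 = {g ∈ G : gHg⁻¹ = H}` of `H` in `PSL(2,ℂ)`, as a set. -/
def NmlH : Set PSL2C := {g | (fun h => g * h * g⁻¹) '' Hset = Hset}

/-!
For `x = [[a, b], [c, d]]` and real `t ≠ 0`, the matrix `x u_t x⁻¹` differs from the identity by
`t` times a matrix with entries `±a²`, `±ac`, `±c²`. If these are real, then the first column
`(a, c)` of `x` is either real or purely imaginary, and multiplying `x` on the left by
`diag(i, -i)`, which normalizes `H`, reduces the second case to the first. A real first column is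
the first column of some `y ∈ SL(2,ℝ)`; then `y⁻¹ x` fixes the first basis vector, so
`x = y [[1, z], [0, 1]]` for some `z ∈ ℂ`, and splitting `z` into real and imaginary parts puts
`π x` in `HV`.
-/

lemma specialLinearGroup_mem_center_fin_two_iff {R : Type*} [CommRing R] [NoZeroDivisors R]
    {A : SL(2, R)} : A ∈ Subgroup.center SL(2, R) ↔ A = 1 ∨ A = -1 := by
  rw [Matrix.SpecialLinearGroup.mem_center_iff]
  constructor
  · rintro ⟨r, hr, hA⟩
    rw [Fintype.card_fin, sq_eq_one_iff] at hr
    rcases hr with rfl | rfl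
    · exact Or.inl (Subtype.ext (by simp [← hA]))
    · exact Or.inr (Subtype.ext (by rw [← hA, map_neg, map_one]; rfl))
  · rintro (rfl | rfl)
    · exact ⟨1, by simp⟩
    · exact ⟨-1, by simp, by rw [map_neg, map_one]; rfl⟩

lemma specialLinearGroup_mem_range_map_iff {n R S : Type*} [Fintype n] [DecidableEq n]
    [CommRing R] [CommRing S] {f : R →+* S} (hf : Function.Injective f)
    {x : Matrix.SpecialLinearGroup n S} :
    x ∈ (Matrix.SpecialLinearGroup.map f).range ↔ ∀ i j, x i j ∈ f.range := by
  constructor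
  · rintro ⟨y, rfl⟩ i j
    exact ⟨y i j, rfl⟩
  · intro hx
    choose M hM using hx
    have map_M : f.mapMatrix (Matrix.of M) = x := Matrix.ext hM
    have det_M : (Matrix.of M).det = 1 := hf <| by
      rw [RingHom.map_det, map_M, x.det_coe, map_one]
    exact ⟨⟨Matrix.of M, det_M⟩, Subtype.ext map_M⟩

lemma forall_im_eq_zero_or_forall_re_eq_zero {ι : Type*} {v : ι → ℂ}
    (h : ∀ i j, (v i * v j).im = 0) : (∀ i, (v i).im = 0) ∨ ∀ i, (v i).re = 0 := by
  refine or_iff_not_imp_left.mpr fun hv j ↦ ?_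
  obtain ⟨i, hi⟩ := not_forall.mp hv
  have re_i : (v i).re = 0 := by
    have sq_im := h i i
    rw [Complex.mul_im, mul_comm (v i).im, ← two_mul] at sq_im
    simpa [hi] using sq_im
  simpa [Complex.mul_im, re_i, hi] using h i j

lemma pr_surjective : Function.Surjective pr :=
  QuotientGroup.mk'_surjective _

lemma pr_eq_pr_iff {x y : SL2C} : pr x = pr y ↔ y = x ∨ y = -x := by
  rw [pr, QuotientGroup.mk'_apply, QuotientGroup.mk'_apply, QuotientGroup.eq,
    specialLinearGroup_mem_center_fin_two_iff, inv_mul_eq_one, inv_mul_eq_iff_eq_mul,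
    mul_neg, mul_one, eq_comm]

lemma pr_mem_Hset_iff {x : SL2C} : pr x ∈ Hset ↔ ∀ i j, (x i j).im = 0 := by
  constructor
  · rintro ⟨y, hy⟩ i j
    rcases pr_eq_pr_iff.mp hy.symm with rfl | rfl <;> simp
  · intro hx
    have mem_range : x ∈ (Matrix.SpecialLinearGroup.map (algebraMap ℝ ℂ)).range :=
      (specialLinearGroup_mem_range_map_iff (algebraMap ℝ ℂ).injective).mpr
        fun i j ↦ ⟨(x i j).re, Complex.ext rfl (hx i j).symm⟩
    obtain ⟨y, rfl⟩ := mem_range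
    exact ⟨y, rfl⟩

lemma Hset_eq_range :
    Hset = (pr.comp (Matrix.SpecialLinearGroup.map (algebraMap ℝ ℂ))).range := by
  ext g
  simp only [Hset, Set.mem_ofPred_eq, SetLike.mem_coe, MonoidHom.mem_range, MonoidHom.comp_apply,
    eq_comm]

lemma NmlH_eq_normalizer : NmlH = Subgroup.normalizer Hset :=
  Set.ext fun _ ↦ Subgroup.mem_normalizer_iff_conj_image_eq.symm

lemma Hset_subset_NmlH : Hset ⊆ NmlH := by
  rw [NmlH_eq_normalizer, Hset_eq_range]
  exact Subgroup.le_normalizer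

/-- The matrix `diag(i, -i)`, whose image in `PSL(2,ℂ)` lies in `𝒩` but not in `H`; left
multiplication by it exchanges real and purely imaginary first columns. -/
def diagI : SL2C := ⟨!![Complex.I, 0; 0, -Complex.I], by simp⟩

lemma coe_diagI : (diagI : Matrix (Fin 2) (Fin 2) ℂ) = !![Complex.I, 0; 0, -Complex.I] := rfl

lemma coe_diagI_conj (x : SL2C) :
    (diagI * x * diagI⁻¹ : SL2C) = !![x 0 0, -x 0 1; -x 1 0, x 1 1] := by
  rw [Matrix.SpecialLinearGroup.coe_mul, Matrix.SpecialLinearGroup.coe_mul,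
    Matrix.SpecialLinearGroup.coe_inv, coe_diagI, Matrix.adjugate_fin_two_of,
    Matrix.eta_fin_two (x : Matrix (Fin 2) (Fin 2) ℂ)]
  simp [mul_right_comm]

lemma pr_diagI_mem_NmlH : pr diagI ∈ NmlH := by
  rw [NmlH_eq_normalizer]
  intro h
  obtain ⟨x, rfl⟩ := pr_surjective h
  simp only [← map_inv, ← map_mul, pr_mem_Hset_iff, coe_diagI_conj]
  simp [Fin.forall_fin_two]

lemma coe_uMat (z : ℂ) : (uMat z : Matrix (Fin 2) (Fin 2) ℂ) = !![1, z; 0, 1] := rfl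

lemma uMat_add (z w : ℂ) : uMat (z + w) = uMat z * uMat w := by
  refine Subtype.ext ?_
  simp [coe_uMat, add_comm]

lemma commute_vv_uu (s t : ℝ) : Commute (vv s) (uu t) := by
  rw [Commute, SemiconjBy, vv, uu, ← map_mul, ← map_mul, ← uMat_add, ← uMat_add, add_comm]

lemma pr_uMat (z : ℂ) : pr (uMat z) = uu z.re * vv z.im := by
  rw [uu, vv, ← map_mul, ← uMat_add, Complex.re_add_im]

lemma uu_mem_Hset (t : ℝ) : uu t ∈ Hset := by
  rw [uu, pr_mem_Hset_iff]
  simp [uMat, Fin.forall_fin_two]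

lemma coe_conj_uMat (x : SL2C) (z : ℂ) :
    (x * uMat z * x⁻¹ : SL2C) =
      !![1 - z * (x 0 0 * x 1 0), z * (x 0 0 * x 0 0);
        -(z * (x 1 0 * x 1 0)), 1 + z * (x 0 0 * x 1 0)] := by
  have det_x : x 0 0 * x 1 1 - x 0 1 * x 1 0 = 1 := by rw [← Matrix.det_fin_two, x.det_coe]
  rw [Matrix.SpecialLinearGroup.coe_mul, Matrix.SpecialLinearGroup.coe_mul,
    Matrix.SpecialLinearGroup.coe_inv, coe_uMat, Matrix.adjugate_fin_two]
  ext i j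
  fin_cases i <;> fin_cases j <;>
    simp only [Fin.isValue, Fin.zero_eta, Fin.mk_one, Matrix.mul_apply, Fin.sum_univ_two,
      Matrix.of_apply, Matrix.cons_val', Matrix.cons_val_fin_one, Matrix.cons_val_zero,
      Matrix.cons_val_one]
  · linear_combination det_x
  · ring
  · ring
  · linear_combination det_x

lemma eq_uMat_of_col_eq {x : SL2C} (h₀₀ : x 0 0 = 1) (h₁₀ : x 1 0 = 0) :
    x = uMat (x 0 1) := by
  have h₁₁ : x 1 1 = 1 := by
    have det_x := x.det_coe
    rw [Matrix.det_fin_two, h₀₀, h₁₀] at det_x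
    simpa using det_x
  refine Subtype.ext ?_
  rw [coe_uMat, Matrix.eta_fin_two (x : Matrix (Fin 2) (Fin 2) ℂ), h₀₀, h₁₀, h₁₁]
  rfl

lemma exists_eq_mul_uMat_of_col_eq {x y : SL2C} (h : ∀ i, x i 0 = y i 0) :
    ∃ z : ℂ, x = y * uMat z := by
  have col_eq : ∀ i, (y⁻¹ * x) i 0 = (1 : SL2C) i 0 := fun i ↦ by
    rw [← inv_mul_cancel y, Matrix.SpecialLinearGroup.coe_mul, Matrix.SpecialLinearGroup.coe_mul]
    simp only [Matrix.mul_apply, h]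
  exact ⟨_, inv_mul_eq_iff_eq_mul.mp (eq_uMat_of_col_eq (col_eq 0) (col_eq 1))⟩

lemma im_col_mul_col_eq_zero_of_conj_uu_mem_Hset {x : SL2C} {t : ℝ} (ht : t ≠ 0)
    (h : pr x * uu t * (pr x)⁻¹ ∈ Hset) (i j : Fin 2) : (x i 0 * x j 0).im = 0 := by
  rw [uu, ← map_inv, ← map_mul, ← map_mul, pr_mem_Hset_iff, coe_conj_uMat] at h
  have h₀₀ : (x 0 0 * x 0 0).im = 0 := by simpa [ht] using h 0 1
  have h₁₁ : (x 1 0 * x 1 0).im = 0 := by simpa [ht] using h 1 0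
  have h₀₁ : (x 0 0 * x 1 0).im = 0 := by simpa [ht] using h 1 1
  fin_cases i <;> fin_cases j
  exacts [h₀₀, h₀₁, mul_comm (x 0 0) _ ▸ h₀₁, h₁₁]

lemma exists_mem_Hset_mul_vv_of_im_col_eq_zero {x : SL2C} (hx : ∀ i, (x i 0).im = 0) :
    ∃ h ∈ Hset, ∃ s : ℝ, pr x = h * vv s := by
  have coe_re : ∀ i, ((x i 0).re : ℂ) = x i 0 := fun i ↦ Complex.ext rfl (hx i).symm
  have coprime_col : IsCoprime (x 0 0).re (x 1 0).re := by
    obtain ⟨p, q, hpq⟩ := x.isCoprime_col 0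
    exact ⟨p.re, q.re, by simpa [hx] using congrArg Complex.re hpq⟩
  obtain ⟨y, y₀₀, y₁₀⟩ := coprime_col.exists_SL2_col 0
  obtain ⟨z, hz⟩ := exists_eq_mul_uMat_of_col_eq (x := x)
    (y := Matrix.SpecialLinearGroup.map (algebraMap ℝ ℂ) y)
    (by simp [Fin.forall_fin_two, y₀₀, y₁₀, coe_re])
  have y_mul_uu_mem : pr (Matrix.SpecialLinearGroup.map (algebraMap ℝ ℂ) y) * uu z.re ∈ Hset := by
    have uu_mem := uu_mem_Hset z.re
    rw [Hset_eq_range] at uu_mem ⊢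
    exact mul_mem ⟨y, rfl⟩ uu_mem
  exact ⟨_, y_mul_uu_mem, z.im, by rw [hz, map_mul, pr_uMat, mul_assoc]⟩

lemma exists_mem_NmlH_mul_vv_of_conj_uu_mem_Hset {g : PSL2C} {t : ℝ} (ht : t ≠ 0)
    (hg : g * uu t * g⁻¹ ∈ Hset) : ∃ n ∈ NmlH, ∃ s : ℝ, g = n * vv s := by
  obtain ⟨x, rfl⟩ := pr_surjective g
  rcases forall_im_eq_zero_or_forall_re_eq_zero
    (im_col_mul_col_eq_zero_of_conj_uu_mem_Hset ht hg) with im_col | re_col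
  · obtain ⟨h, hh, s, hx⟩ := exists_mem_Hset_mul_vv_of_im_col_eq_zero im_col
    exact ⟨h, Hset_subset_NmlH hh, s, hx⟩
  · have im_col : ∀ i, ((diagI * x) i 0).im = 0 := by
      rw [Matrix.SpecialLinearGroup.coe_mul, coe_diagI]
      simp [Fin.forall_fin_two, Matrix.mul_apply, re_col]
    obtain ⟨h, hh, s, hx⟩ := exists_mem_Hset_mul_vv_of_im_col_eq_zero im_col
    have inv_mul_mem : (pr diagI)⁻¹ * h ∈ NmlH := by
      have diagI_mem := pr_diagI_mem_NmlH
      have h_mem := Hset_subset_NmlH hh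
      rw [NmlH_eq_normalizer] at diagI_mem h_mem ⊢
      exact mul_mem (inv_mem diagI_mem) h_mem
    exact ⟨_, inv_mul_mem, s, by rw [mul_assoc, ← hx, map_mul, inv_mul_cancel_left]⟩

lemma conj_uu_mem_Hset_of_mem_NmlH {n : PSL2C} (hn : n ∈ NmlH) (s t : ℝ) :
    n * vv s * uu t * (n * vv s)⁻¹ ∈ Hset := by
  have conj_eq : n * vv s * uu t * (n * vv s)⁻¹ = n * uu t * n⁻¹ := by
    rw [mul_assoc n, (commute_vv_uu s t).eq]
    group
  rw [NmlH_eq_normalizer] at hn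
  rw [conj_eq]
  exact (hn _).mp (uu_mem_Hset t)

theorem conjugates_U_into_H_eq_normalizer_V_general {T : Set ℝ} (hT : ∃ t ∈ T, t ≠ 0) :
    {g : PSL2C | ∀ t ∈ T, g * uu t * g⁻¹ ∈ Hset} =
      {x : PSL2C | ∃ n ∈ NmlH, ∃ s : ℝ, x = n * vv s} := by
  obtain ⟨t₀, ht₀, t₀_ne_zero⟩ := hT
  apply Set.Subset.antisymm
  · intro g hg
    exact exists_mem_NmlH_mul_vv_of_conj_uu_mem_Hset t₀_ne_zero (hg t₀ ht₀)
  · rintro _ ⟨n, hn, s, rfl⟩ t -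
    exact conj_uu_mem_Hset_of_mem_NmlH hn s t

/-- In `G = PSL(2,ℂ)`: `{g : g U g⁻¹ ⊆ H} = 𝒩V`, where `𝒩` is the normalizer
of `H` in `G`. -/
theorem conjugates_U_into_H_eq_normalizer_V :
    {g : PSL2C | ∀ t : ℝ, g * uu t * g⁻¹ ∈ Hset} =
      {x : PSL2C | ∃ n ∈ NmlH, ∃ s : ℝ, x = n * vv s} := by
  simpa using conjugates_U_into_H_eq_normalizer_V_general ⟨1, Set.mem_univ 1, one_ne_zero⟩

end
end
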